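/- Let f : [ω₂]² → [ω₂]^{≤ω} satisfy f{α,β} ⊆ α ∩ β for all pairs. If p and p' are good twins in P_f, then their amalgamation r = p + p' is an element of P_f and is a common extension of p and p' (r ≤ p and r ≤ p'). -/

import Mathlib

attribute [local instance] Classical.propDecidable

noncomputable section

/-- The second uncountable cardinal ω₂, as an ordinal. -/
def omega2 : Ordinal := (Cardinal.aleph 2).ord

/-- The operation `x * y` on nonempty finite sets of ordinals with `max x ≠ max y`:
`x \ y` if `max x ∈ y`, `y \ x` if `max y ∈ x`, and `x ∩ y` otherwise. -/
def ostar (x y : Finset Ordinal) : Finset Ordinal :=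
  if ∃ m ∈ y, x.max = (m : WithBot Ordinal) then x \ y
  else if ∃ m ∈ x, y.max = (m : WithBot Ordinal) then y \ x
  else x ∩ y

/-- The conditions of the poset `P_f`: triples `(a, h, i)` where `a` is a finite
subset of ω₂, `h : a → 𝒫(a)` with `max (h ξ) = ξ`, `i : [a]² → 𝒫(a)` with
`i {ξ,η} ⊆ f {ξ,η}`, and `h ξ * h η ⊆ ⋃ {h ν : ν ∈ i {ξ,η}}`. -/
structure PfCond (f : Ordinal → Ordinal → Set Ordinal) where
  a : Finset Ordinal
  h : Ordinal → Finset Ordinal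
  i : Ordinal → Ordinal → Finset Ordinal
  a_lt : ∀ ξ ∈ a, ξ < omega2
  h_sub : ∀ ξ ∈ a, h ξ ⊆ a
  h_mem : ∀ ξ ∈ a, ξ ∈ h ξ
  h_le : ∀ ξ ∈ a, ∀ η ∈ h ξ, η ≤ ξ
  i_symm : ∀ ξ η, i ξ η = i η ξ
  i_sub_f : ∀ ξ ∈ a, ∀ η ∈ a, ξ ≠ η → ∀ ν ∈ i ξ η, ν ∈ f ξ η
  i_sub_a : ∀ ξ ∈ a, ∀ η ∈ a, ξ ≠ η → i ξ η ⊆ a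
  star_cond : ∀ ξ ∈ a, ∀ η ∈ a, ξ ≠ η → ostar (h ξ) (h η) ⊆ (i ξ η).biUnion h

/-- The order on `P_f`: `p ≤ q` iff `a^p ⊇ a^q`, `h^p(ξ) ∩ a^q = h^q(ξ)` for
`ξ ∈ a^q`, and `i^p` extends `i^q`. -/
def PfLe {f : Ordinal → Ordinal → Set Ordinal} (p q : PfCond f) : Prop :=
  q.a ⊆ p.a ∧ (∀ ξ ∈ q.a, p.h ξ ∩ q.a = q.h ξ) ∧
    ∀ ξ ∈ q.a, ∀ η ∈ q.a, ξ ≠ η → p.i ξ η = q.i ξ η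

/-- Two finite subsets `x` and `y` of ω₂ are good for `f`. -/
def GoodFor (f : Ordinal → Ordinal → Set Ordinal) (x y : Finset Ordinal) : Prop :=
  ∀ α ∈ x ∩ y, ∀ β ∈ x \ y, ∀ γ ∈ y \ x,
    ((α < β ∧ α < γ) → α ∈ f β γ) ∧
    (α < β → f α γ ⊆ f β γ) ∧
    (α < γ → f α β ⊆ f γ β)

/-- `p` and `p'` are good twins: the natural order preserving bijection between
`a^p` and `a^{p'}` is an isomorphism of the conditions fixing `a^p ∩ a^{p'}`,
`i` and `i'` agree on pairs from `a^p ∩ a^{p'}`, and `a^p`, `a^{p'}` are good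
for `f`. -/
def GoodTwins {f : Ordinal → Ordinal → Set Ordinal} (p p' : PfCond f) : Prop :=
  (∃ e : Ordinal → Ordinal,
    Set.BijOn e ↑p.a ↑p'.a ∧
    (∀ ξ ∈ p.a, ∀ η ∈ p.a, ξ < η → e ξ < e η) ∧
    (∀ ξ ∈ p.a ∩ p'.a, e ξ = ξ) ∧
    (∀ ξ ∈ p.a, p'.h (e ξ) = (p.h ξ).image e) ∧
    (∀ ξ ∈ p.a, ∀ η ∈ p.a, ξ ≠ η → p'.i (e ξ) (e η) = (p.i ξ η).image e)) ∧
  (∀ ξ ∈ p.a ∩ p'.a, ∀ η ∈ p.a ∩ p'.a, ξ ≠ η → p.i ξ η = p'.i ξ η) ∧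
  GoodFor f p.a p'.a

/-- `δ` is the ordinal `δ_η = min {δ ∈ a^p ∩ a^{p'} : η ∈ h^p(δ) ∪ h^{p'}(δ)}`. -/
def DeltaIs {f : Ordinal → Ordinal → Set Ordinal} (p p' : PfCond f)
    (η δ : Ordinal) : Prop :=
  δ ∈ p.a ∩ p'.a ∧ η ∈ p.h δ ∪ p'.h δ ∧
    ∀ δ' ∈ p.a ∩ p'.a, η ∈ p.h δ' ∪ p'.h δ' → δ ≤ δ'

/-!
Let `δ_x` be the least common element `δ` of the two supports with `x ∈ h(δ) ∪ h'(δ)`. For `ξ ∈ a`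
and `x ∈ a'`, membership `x ∈ g(ξ)` just means `δ_x ∈ h(ξ)`; on `a ∩ a'` this is a theorem, because
`i{δ_x, ξ}` is contained in `a ∩ a' ∩ δ_x` and so cannot cover `x`. Thus, seen from `a`, each point
of `a'` behaves like a point of `a`, and the covering condition for pairs of `a` is inherited
from `p`.

For `ξ ∈ a \ a'`, `η ∈ a' \ a` and a point `x ∈ h(ξ)` that has to be covered, exactly one of `ξ`
and `x` lies in `g(η)`. By minimality of `δ_ξ` and `δ_x`, some `ζ < η` in `a ∩ a'` already
separates `ξ` from `x`. The covering condition of `p` for `{ξ, ζ}` then provides a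
`ν ∈ f{ξ, ζ} ⊆ f{ξ, η}` with `x ∈ h(ν)`, unless `ζ ∈ h(ξ)`, in which case `ζ ∈ f{ξ, η}` is itself
such a `ν`. Up to symmetry, the only other points to cover are the `x ∈ g(ξ) ∩ a'` when `ξ ∈ g(η)`;
then `δ_x < ξ < η`, so `δ_x ∈ f{ξ, η}` covers `x`.
-/

theorem max_eq_coe_of_isGreatest {α : Type*} [LinearOrder α] {s : Finset α} {m : α}
    (hm : IsGreatest (s : Set α) m) : s.max = m :=
  le_antisymm (Finset.max_le fun _ ht => WithBot.coe_le_coe.2 (hm.2 ht)) (Finset.le_max hm.1)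

theorem ostar_eq_ite {x y : Finset Ordinal} {ξ η : Ordinal}
    (hx : IsGreatest (x : Set Ordinal) ξ) (hy : IsGreatest (y : Set Ordinal) η) :
    ostar x y = if ξ ∈ y then x \ y else if η ∈ x then y \ x else x ∩ y := by
  simp only [ostar, max_eq_coe_of_isGreatest hx, max_eq_coe_of_isGreatest hy, WithBot.coe_inj,
    exists_eq_right']

theorem mem_ostar_iff {x y : Finset Ordinal} {ξ η z : Ordinal} (hne : ξ ≠ η)
    (hx : IsGreatest (x : Set Ordinal) ξ) (hy : IsGreatest (y : Set Ordinal) η) :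
    z ∈ ostar x y ↔ (ξ ∈ y ∧ z ∈ x ∧ z ∉ y) ∨ (η ∈ x ∧ z ∈ y ∧ z ∉ x) ∨
      (ξ ∉ y ∧ η ∉ x ∧ z ∈ x ∧ z ∈ y) := by
  have not_both : ¬(ξ ∈ y ∧ η ∈ x) := fun h => hne (le_antisymm (hy.2 h.1) (hx.2 h.2))
  rw [ostar_eq_ite hx hy]
  split_ifs <;> simp only [Finset.mem_sdiff, Finset.mem_inter] <;> tauto

namespace PfCond

variable {f : Ordinal → Ordinal → Set Ordinal}

theorem isGreatest_h (p : PfCond f) {ξ : Ordinal} (hξ : ξ ∈ p.a) :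
    IsGreatest (p.h ξ : Set Ordinal) ξ :=
  ⟨p.h_mem ξ hξ, fun η hη => p.h_le ξ hξ η hη⟩

theorem exists_mem_i_of_separates (p : PfCond f) {ξ η x : Ordinal} (hξ : ξ ∈ p.a) (hη : η ∈ p.a)
    (hηξ : η ∉ p.h ξ) (hx : x ∈ p.h ξ) (hsep : ¬(ξ ∈ p.h η ↔ x ∈ p.h η)) :
    ∃ ν ∈ p.i ξ η, x ∈ p.h ν := by
  have hne : ξ ≠ η := fun h => hηξ (h ▸ p.h_mem ξ hξ)
  have hmem : x ∈ ostar (p.h ξ) (p.h η) := by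
    rw [mem_ostar_iff hne (p.isGreatest_h hξ) (p.isGreatest_h hη)]
    tauto
  exact Finset.mem_biUnion.1 (p.star_cond ξ hξ η hη hne hmem)

end PfCond

/-- The part of the notion of good twins on which the amalgamation rests, with the isomorphism
between `p` and `p'` forgotten: `h` and `h'`, as well as `i` and `i'`, agree on the common part of
the supports, and the supports are good for `f`. -/
structure Coherent {f : Ordinal → Ordinal → Set Ordinal} (p p' : PfCond f) : Prop where
  mem_h_iff : ∀ ξ ∈ p.a ∩ p'.a, ∀ η ∈ p.a ∩ p'.a, η ∈ p.h ξ ↔ η ∈ p'.h ξ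
  i_eq : ∀ ξ ∈ p.a ∩ p'.a, ∀ η ∈ p.a ∩ p'.a, ξ ≠ η → p.i ξ η = p'.i ξ η
  goodFor : GoodFor f p.a p'.a

/-- `(a ∪ a', g, j)` is the amalgamation `p + p'`. The functions `g` and `j` are pinned down only
on `a ∪ a'` and on pairs of distinct elements of it, as the functions `h` and `i` of a condition
are total here. -/
structure IsAmalgam {f : Ordinal → Ordinal → Set Ordinal} (p p' : PfCond f)
    (g : Ordinal → Finset Ordinal) (j : Ordinal → Ordinal → Finset Ordinal) : Prop where
  h_inter : ∀ ξ ∈ p.a ∩ p'.a, g ξ = p.h ξ ∪ p'.h ξ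
  h_left : ∀ ξ ∈ p.a \ p'.a, g ξ = p.h ξ ∪
    (p'.a \ p.a).filter (fun η => ∃ δ, DeltaIs p p' η δ ∧ δ ∈ p.h ξ)
  h_right : ∀ ξ ∈ p'.a \ p.a, g ξ = p'.h ξ ∪
    (p.a \ p'.a).filter (fun η => ∃ δ, DeltaIs p p' η δ ∧ δ ∈ p'.h ξ)
  i_left : ∀ ξ ∈ p.a, ∀ η ∈ p.a, ξ ≠ η → j ξ η = p.i ξ η
  i_right : ∀ ξ ∈ p'.a, ∀ η ∈ p'.a, ξ ≠ η → j ξ η = p'.i ξ η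
  i_cross : ∀ ξ η, ξ ∈ p.a ∪ p'.a → η ∈ p.a ∪ p'.a →
    ¬(ξ ∈ p.a ∧ η ∈ p.a) → ¬(ξ ∈ p'.a ∧ η ∈ p'.a) →
    j ξ η = (p.a ∪ p'.a).filter (fun ν => ν ∈ f ξ η)

section Delta

variable {f : Ordinal → Ordinal → Set Ordinal} {p p' : PfCond f} {x δ ε ξ : Ordinal}

theorem deltaIs_comm : DeltaIs p p' x δ ↔ DeltaIs p' p x δ := by
  simp only [DeltaIs, Finset.inter_comm p.a, Finset.union_comm (p.h _)]

theorem DeltaIs.unique (hδ : DeltaIs p p' x δ) (hε : DeltaIs p p' x ε) : δ = ε :=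
  le_antisymm (hδ.2.2 ε hε.1 hε.2.1) (hε.2.2 δ hδ.1 hδ.2.1)

theorem DeltaIs.le_of_mem_h (hδ : DeltaIs p p' x δ) (hξ : ξ ∈ p.a ∩ p'.a) (hx : x ∈ p.h ξ) :
    δ ≤ ξ :=
  hδ.2.2 ξ hξ (Finset.mem_union_left _ hx)

theorem DeltaIs.self_le (hδ : DeltaIs p p' x δ) : x ≤ δ := by
  obtain ⟨hδa, hδa'⟩ := Finset.mem_inter.1 hδ.1
  exact (Finset.mem_union.1 hδ.2.1).elim (p.h_le δ hδa x) (p'.h_le δ hδa' x)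

theorem exists_deltaIs_le (hξ : ξ ∈ p.a ∩ p'.a) (hx : x ∈ p.h ξ) : ∃ δ ≤ ξ, DeltaIs p p' x δ := by
  have hξ_mem : ξ ∈ (p.a ∩ p'.a).filter fun δ => x ∈ p.h δ ∪ p'.h δ :=
    Finset.mem_filter.2 ⟨hξ, Finset.mem_union_left _ hx⟩
  obtain ⟨δ, hδ, hmin⟩ := Finset.exists_min_image _ id ⟨ξ, hξ_mem⟩
  obtain ⟨hδ_inter, hxδ⟩ := Finset.mem_filter.1 hδ
  exact ⟨δ, hmin ξ hξ_mem, hδ_inter, hxδ, fun δ' h h' => hmin δ' (Finset.mem_filter.2 ⟨h, h'⟩)⟩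

end Delta

section Coherent

variable {f : Ordinal → Ordinal → Set Ordinal} {p p' : PfCond f} {x δ ξ : Ordinal}

theorem GoodTwins.coherent (htw : GoodTwins p p') : Coherent p p' := by
  obtain ⟨⟨e, hbij, -, hfix, hh, -⟩, hi, hgood⟩ := htw
  refine ⟨fun ξ hξ η hη => ?_, hi, hgood⟩
  have hξa := (Finset.mem_inter.1 hξ).1
  have hηa := (Finset.mem_inter.1 hη).1
  calc η ∈ p.h ξ ↔ e η ∈ (p.h ξ).image e := by
        rw [← Finset.mem_coe (s := (p.h ξ).image e), Finset.coe_image,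
          hbij.injOn.mem_image_iff (Finset.coe_subset.2 (p.h_sub ξ hξa)) hηa, Finset.mem_coe]
    _ ↔ η ∈ p'.h ξ := by rw [← hh ξ hξa, hfix ξ hξ, hfix η hη]

theorem GoodFor.symm (hsymm : ∀ α β, f α β = f β α) {a b : Finset Ordinal} (h : GoodFor f a b) :
    GoodFor f b a := by
  intro α hα β hβ γ hγ
  obtain ⟨hmem, hβ_sub, hγ_sub⟩ := h α (Finset.inter_comm b a ▸ hα) γ hγ β hβ
  exact ⟨fun hlt => hsymm γ β ▸ hmem hlt.symm, hγ_sub, hβ_sub⟩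

theorem Coherent.symm (hsymm : ∀ α β, f α β = f β α) (hc : Coherent p p') : Coherent p' p where
  mem_h_iff ξ hξ η hη := by
    rw [Finset.inter_comm] at hξ hη
    exact (hc.mem_h_iff ξ hξ η hη).symm
  i_eq ξ hξ η hη hne := by
    rw [Finset.inter_comm] at hξ hη
    exact (hc.i_eq ξ hξ η hη hne).symm
  goodFor := hc.goodFor.symm hsymm

theorem Coherent.mem_h_union_iff (hc : Coherent p p') (hx : x ∈ p.a) (hξ : ξ ∈ p.a ∩ p'.a) :
    x ∈ p.h ξ ∪ p'.h ξ ↔ x ∈ p.h ξ := by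
  rw [Finset.mem_union, or_iff_left_iff_imp]
  intro hx'
  have hxa' := p'.h_sub ξ (Finset.mem_inter.1 hξ).2 hx'
  exact (hc.mem_h_iff ξ hξ x (Finset.mem_inter.2 ⟨hx, hxa'⟩)).2 hx'

theorem Coherent.mem_h_of_deltaIs (hc : Coherent p p') (hx : x ∈ p.a) (hδ : DeltaIs p p' x δ) :
    x ∈ p.h δ :=
  (hc.mem_h_union_iff hx hδ.1).1 hδ.2.1

theorem Coherent.deltaIs_self (hc : Coherent p p') (hx : x ∈ p.a ∩ p'.a) : DeltaIs p p' x x := by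
  have hxa := (Finset.mem_inter.1 hx).1
  refine ⟨hx, Finset.mem_union_left _ (p.h_mem x hxa), fun ξ hξ hxξ => ?_⟩
  exact p.h_le ξ (Finset.mem_inter.1 hξ).1 x ((hc.mem_h_union_iff hxa hξ).1 hxξ)

theorem Coherent.notMem_h_of_mem_i (hc : Coherent p p') (hlt : ∀ α β γ, γ ∈ f α β → γ < α)
    (hδ : DeltaIs p p' x δ) (hξ : ξ ∈ p.a ∩ p'.a) (hne : δ ≠ ξ) {ν : Ordinal}
    (hν : ν ∈ p.i δ ξ) : x ∉ p.h ν := by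
  obtain ⟨hδa, hδa'⟩ := Finset.mem_inter.1 hδ.1
  obtain ⟨hξa, hξa'⟩ := Finset.mem_inter.1 hξ
  have hνa : ν ∈ p.a := p.i_sub_a δ hδa ξ hξa hne hν
  have hνa' : ν ∈ p'.a := p'.i_sub_a δ hδa' ξ hξa' hne (hc.i_eq δ hδ.1 ξ hξ hne ▸ hν)
  have hνδ : ν < δ := hlt _ _ _ (p.i_sub_f δ hδa ξ hξa hne ν hν)
  exact fun hx => hνδ.not_ge (hδ.le_of_mem_h (Finset.mem_inter.2 ⟨hνa, hνa'⟩) hx)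

theorem Coherent.deltaIs_mem_h_iff (hc : Coherent p p') (hlt : ∀ α β γ, γ ∈ f α β → γ < α)
    (hx : x ∈ p.a) (hδ : DeltaIs p p' x δ) (hξ : ξ ∈ p.a ∩ p'.a) (hle : δ ≤ ξ) :
    δ ∈ p.h ξ ↔ x ∈ p.h ξ := by
  have hxδ : x ∈ p.h δ := hc.mem_h_of_deltaIs hx hδ
  have hδa := (Finset.mem_inter.1 hδ.1).1
  have hξa := (Finset.mem_inter.1 hξ).1
  obtain rfl | hne := eq_or_ne δ ξ
  · exact iff_of_true (p.h_mem δ hδa) hxδ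
  by_contra hsep
  have hξδ : ξ ∉ p.h δ := fun h => hne (le_antisymm hle (p.h_le δ hδa ξ h))
  obtain ⟨ν, hν, hxν⟩ := p.exists_mem_i_of_separates hδa hξa hξδ hxδ hsep
  exact hc.notMem_h_of_mem_i hlt hδ hξ hne hν hxν

theorem Coherent.mem_h_iff_exists_deltaIs (hc : Coherent p p')
    (hlt : ∀ α β γ, γ ∈ f α β → γ < α) (hx : x ∈ p.a) (hξ : ξ ∈ p.a ∩ p'.a) :
    x ∈ p.h ξ ↔ ∃ δ, DeltaIs p p' x δ ∧ δ ∈ p.h ξ := by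
  constructor
  · intro hxξ
    obtain ⟨δ, hle, hδ⟩ := exists_deltaIs_le hξ hxξ
    exact ⟨δ, hδ, (hc.deltaIs_mem_h_iff hlt hx hδ hξ hle).2 hxξ⟩
  · rintro ⟨δ, hδ, hδξ⟩
    have hle := p.h_le ξ (Finset.mem_inter.1 hξ).1 δ hδξ
    exact (hc.deltaIs_mem_h_iff hlt hx hδ hξ hle).1 hδξ

end Coherent

namespace IsAmalgam

variable {f : Ordinal → Ordinal → Set Ordinal} {p p' : PfCond f} {g : Ordinal → Finset Ordinal}
  {j : Ordinal → Ordinal → Finset Ordinal} {ξ η ζ x δ : Ordinal}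

theorem symm (hr : IsAmalgam p p' g j) : IsAmalgam p' p g j where
  h_inter ξ hξ := by rw [hr.h_inter ξ (Finset.inter_comm p'.a p.a ▸ hξ), Finset.union_comm]
  h_left ξ hξ := by simp only [hr.h_right ξ hξ, deltaIs_comm (p := p)]
  h_right ξ hξ := by simp only [hr.h_left ξ hξ, deltaIs_comm (p := p)]
  i_left := hr.i_right
  i_right := hr.i_left
  i_cross ξ η hξ hη hnot' hnot := by
    rw [Finset.union_comm] at hξ hη ⊢
    exact hr.i_cross ξ η hξ hη hnot hnot'

theorem g_subset (hr : IsAmalgam p p' g j) (hξ : ξ ∈ p.a) : g ξ ⊆ p.a ∪ p'.a := by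
  by_cases hξ' : ξ ∈ p'.a
  · rw [hr.h_inter ξ (Finset.mem_inter.2 ⟨hξ, hξ'⟩)]
    exact Finset.union_subset_union (p.h_sub ξ hξ) (p'.h_sub ξ hξ')
  · rw [hr.h_left ξ (Finset.mem_sdiff.2 ⟨hξ, hξ'⟩)]
    exact Finset.union_subset_union (p.h_sub ξ hξ)
      ((Finset.filter_subset _ _).trans Finset.sdiff_subset)

theorem mem_g_iff_mem_h (hr : IsAmalgam p p' g j) (hc : Coherent p p') (hξ : ξ ∈ p.a)
    (hx : x ∈ p.a) : x ∈ g ξ ↔ x ∈ p.h ξ := by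
  by_cases hξ' : ξ ∈ p'.a
  · have hξ_inter := Finset.mem_inter.2 ⟨hξ, hξ'⟩
    rw [hr.h_inter ξ hξ_inter, hc.mem_h_union_iff hx hξ_inter]
  · simp [hr.h_left ξ (Finset.mem_sdiff.2 ⟨hξ, hξ'⟩), hx]

theorem self_mem_g (hr : IsAmalgam p p' g j) (hc : Coherent p p') (hξ : ξ ∈ p.a) : ξ ∈ g ξ :=
  (hr.mem_g_iff_mem_h hc hξ hξ).2 (p.h_mem ξ hξ)

theorem g_inter_a (hr : IsAmalgam p p' g j) (hc : Coherent p p') (hξ : ξ ∈ p.a) :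
    g ξ ∩ p.a = p.h ξ := by
  ext x
  rw [Finset.mem_inter]
  exact ⟨fun h => (hr.mem_g_iff_mem_h hc hξ h.2).1 h.1, fun h =>
    have hx := p.h_sub ξ hξ h
    ⟨(hr.mem_g_iff_mem_h hc hξ hx).2 h, hx⟩⟩

theorem mem_g_of_deltaIs (hr : IsAmalgam p p' g j) (hδ : DeltaIs p p' x δ) : x ∈ g δ :=
  hr.h_inter δ hδ.1 ▸ hδ.2.1

theorem mem_g_iff_exists_deltaIs (hr : IsAmalgam p p' g j) (hc : Coherent p p')
    (hsymm : ∀ α β, f α β = f β α) (hlt : ∀ α β γ, γ ∈ f α β → γ < α) (hξ : ξ ∈ p.a)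
    (hx : x ∈ p'.a) : x ∈ g ξ ↔ ∃ δ, DeltaIs p p' x δ ∧ δ ∈ p.h ξ := by
  by_cases hxa : x ∈ p.a
  · have hself := hc.deltaIs_self (Finset.mem_inter.2 ⟨hxa, hx⟩)
    rw [hr.mem_g_iff_mem_h hc hξ hxa]
    exact ⟨fun h => ⟨x, hself, h⟩, fun ⟨δ, hδ, hδξ⟩ => hself.unique hδ ▸ hδξ⟩
  by_cases hξ' : ξ ∈ p'.a
  · have hc' := hc.symm hsymm
    rw [hr.symm.mem_g_iff_mem_h hc' hξ' hx,
      hc'.mem_h_iff_exists_deltaIs hlt hx (Finset.mem_inter.2 ⟨hξ', hξ⟩)]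
    simp only [deltaIs_comm (p := p') (p' := p)]
    refine exists_congr fun δ => and_congr_right fun hδ => ?_
    exact (hc.mem_h_iff ξ (Finset.mem_inter.2 ⟨hξ, hξ'⟩) δ hδ.1).symm
  · have hxξ : x ∉ p.h ξ := fun h => hxa (p.h_sub ξ hξ h)
    simp [hr.h_left ξ (Finset.mem_sdiff.2 ⟨hξ, hξ'⟩), hx, hxa, hxξ]

theorem isGreatest_g (hr : IsAmalgam p p' g j) (hc : Coherent p p')
    (hsymm : ∀ α β, f α β = f β α) (hlt : ∀ α β γ, γ ∈ f α β → γ < α) (hξ : ξ ∈ p.a) :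
    IsGreatest (g ξ : Set Ordinal) ξ := by
  refine ⟨hr.self_mem_g hc hξ, fun x hx => ?_⟩
  rcases Finset.mem_union.1 (hr.g_subset hξ hx) with hxa | hxa'
  · exact p.h_le ξ hξ x ((hr.mem_g_iff_mem_h hc hξ hxa).1 hx)
  · obtain ⟨δ, hδ, hδξ⟩ := (hr.mem_g_iff_exists_deltaIs hc hsymm hlt hξ hxa').1 hx
    exact hδ.self_le.trans (p.h_le ξ hξ δ hδξ)

theorem exists_forall_mem_g_iff_mem_h (hr : IsAmalgam p p' g j) (hc : Coherent p p')
    (hsymm : ∀ α β, f α β = f β α) (hlt : ∀ α β γ, γ ∈ f α β → γ < α) (hξ : ξ ∈ p.a)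
    (hx : x ∈ g ξ) : ∃ y, ∀ ζ ∈ p.a, x ∈ g ζ ↔ y ∈ p.h ζ := by
  rcases Finset.mem_union.1 (hr.g_subset hξ hx) with hxa | hxa'
  · exact ⟨x, fun ζ hζ => hr.mem_g_iff_mem_h hc hζ hxa⟩
  · obtain ⟨δ, hδ, -⟩ := (hr.mem_g_iff_exists_deltaIs hc hsymm hlt hξ hxa').1 hx
    refine ⟨δ, fun ζ hζ => ?_⟩
    rw [hr.mem_g_iff_exists_deltaIs hc hsymm hlt hζ hxa']
    exact ⟨fun ⟨ε, hε, hεζ⟩ => hδ.unique hε ▸ hεζ, fun h => ⟨δ, hδ, h⟩⟩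

theorem ostar_subset_of_mem_left (hr : IsAmalgam p p' g j) (hc : Coherent p p')
    (hsymm : ∀ α β, f α β = f β α) (hlt : ∀ α β γ, γ ∈ f α β → γ < α) (hξ : ξ ∈ p.a)
    (hη : η ∈ p.a) (hne : ξ ≠ η) : ostar (g ξ) (g η) ⊆ (j ξ η).biUnion g := by
  intro x hx
  have mem_ostar_g {z : Ordinal} := mem_ostar_iff (z := z) hne
    (hr.isGreatest_g hc hsymm hlt hξ) (hr.isGreatest_g hc hsymm hlt hη)
  obtain ⟨y, hy⟩ : ∃ y, ∀ ζ ∈ p.a, x ∈ g ζ ↔ y ∈ p.h ζ := by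
    have hx_mem : x ∈ g ξ ∨ x ∈ g η := by
      rw [mem_ostar_g] at hx
      tauto
    exact hx_mem.elim (hr.exists_forall_mem_g_iff_mem_h hc hsymm hlt hξ)
      (hr.exists_forall_mem_g_iff_mem_h hc hsymm hlt hη)
  have hy_ostar : y ∈ ostar (p.h ξ) (p.h η) := by
    rwa [mem_ostar_iff hne (p.isGreatest_h hξ) (p.isGreatest_h hη),
      ← hr.mem_g_iff_mem_h hc hη hξ, ← hr.mem_g_iff_mem_h hc hξ hη, ← hy ξ hξ, ← hy η hη,
      ← mem_ostar_g]
  obtain ⟨ν, hν, hyν⟩ := Finset.mem_biUnion.1 (p.star_cond ξ hξ η hη hne hy_ostar)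
  rw [Finset.mem_biUnion, hr.i_left ξ hξ η hη hne]
  exact ⟨ν, hν, (hy ν (p.i_sub_a ξ hξ η hη hne hν)).2 hyν⟩

theorem i_comm (hr : IsAmalgam p p' g j) (hsymm : ∀ α β, f α β = f β α)
    (hξ : ξ ∈ p.a ∪ p'.a) (hη : η ∈ p.a ∪ p'.a) (hne : ξ ≠ η) : j ξ η = j η ξ := by
  by_cases hleft : ξ ∈ p.a ∧ η ∈ p.a
  · rw [hr.i_left ξ hleft.1 η hleft.2 hne, hr.i_left η hleft.2 ξ hleft.1 hne.symm, p.i_symm]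
  by_cases hright : ξ ∈ p'.a ∧ η ∈ p'.a
  · rw [hr.i_right ξ hright.1 η hright.2 hne, hr.i_right η hright.2 ξ hright.1 hne.symm,
      p'.i_symm]
  rw [hr.i_cross ξ η hξ hη hleft hright,
    hr.i_cross η ξ hη hξ (mt And.symm hleft) (mt And.symm hright), hsymm]

theorem mem_f_of_mem_i (hr : IsAmalgam p p' g j) (hξ : ξ ∈ p.a ∪ p'.a) (hη : η ∈ p.a ∪ p'.a)
    (hne : ξ ≠ η) {ν : Ordinal} (hν : ν ∈ j ξ η) : ν ∈ f ξ η := by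
  by_cases hleft : ξ ∈ p.a ∧ η ∈ p.a
  · exact p.i_sub_f ξ hleft.1 η hleft.2 hne ν (hr.i_left ξ hleft.1 η hleft.2 hne ▸ hν)
  by_cases hright : ξ ∈ p'.a ∧ η ∈ p'.a
  · exact p'.i_sub_f ξ hright.1 η hright.2 hne ν (hr.i_right ξ hright.1 η hright.2 hne ▸ hν)
  rw [hr.i_cross ξ η hξ hη hleft hright] at hν
  exact (Finset.mem_filter.1 hν).2

theorem i_subset (hr : IsAmalgam p p' g j) (hξ : ξ ∈ p.a ∪ p'.a) (hη : η ∈ p.a ∪ p'.a)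
    (hne : ξ ≠ η) : j ξ η ⊆ p.a ∪ p'.a := by
  by_cases hleft : ξ ∈ p.a ∧ η ∈ p.a
  · rw [hr.i_left ξ hleft.1 η hleft.2 hne]
    exact (p.i_sub_a ξ hleft.1 η hleft.2 hne).trans Finset.subset_union_left
  by_cases hright : ξ ∈ p'.a ∧ η ∈ p'.a
  · rw [hr.i_right ξ hright.1 η hright.2 hne]
    exact (p'.i_sub_a ξ hright.1 η hright.2 hne).trans Finset.subset_union_right
  rw [hr.i_cross ξ η hξ hη hleft hright]
  exact Finset.filter_subset _ _

theorem mem_i_cross_iff (hr : IsAmalgam p p' g j) (hξ : ξ ∈ p.a \ p'.a) (hη : η ∈ p'.a \ p.a)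
    {ν : Ordinal} : ν ∈ j ξ η ↔ ν ∈ p.a ∪ p'.a ∧ ν ∈ f ξ η := by
  obtain ⟨hξa, hξa'⟩ := Finset.mem_sdiff.1 hξ
  obtain ⟨hηa', hηa⟩ := Finset.mem_sdiff.1 hη
  rw [hr.i_cross ξ η (Finset.mem_union_left _ hξa) (Finset.mem_union_right _ hηa')
    (fun h => hηa h.2) (fun h => hξa' h.1), Finset.mem_filter]

theorem mem_i_cross_of_lt (hr : IsAmalgam p p' g j) (hc : Coherent p p') (hξ : ξ ∈ p.a \ p'.a)
    (hη : η ∈ p'.a \ p.a) (hζ : ζ ∈ p.a ∩ p'.a) (hζξ : ζ < ξ) (hζη : ζ < η) : ζ ∈ j ξ η :=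
  (hr.mem_i_cross_iff hξ hη).2 ⟨Finset.mem_union_left _ (Finset.mem_inter.1 hζ).1,
    (hc.goodFor ζ hζ ξ hξ η hη).1 ⟨hζξ, hζη⟩⟩

theorem i_left_subset_i_cross (hr : IsAmalgam p p' g j) (hc : Coherent p p')
    (hsymm : ∀ α β, f α β = f β α) (hξ : ξ ∈ p.a \ p'.a) (hη : η ∈ p'.a \ p.a)
    (hζ : ζ ∈ p.a ∩ p'.a) (hζη : ζ < η) : p.i ξ ζ ⊆ j ξ η := by
  intro ν hν
  have hξa := (Finset.mem_sdiff.1 hξ).1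
  obtain ⟨hζa, hζa'⟩ := Finset.mem_inter.1 hζ
  have hne : ξ ≠ ζ := fun h => (Finset.mem_sdiff.1 hξ).2 (h ▸ hζa')
  have hνf : ν ∈ f ζ ξ := hsymm ξ ζ ▸ p.i_sub_f ξ hξa ζ hζa hne ν hν
  refine (hr.mem_i_cross_iff hξ hη).2
    ⟨Finset.mem_union_left _ (p.i_sub_a ξ hξa ζ hζa hne hν), ?_⟩
  exact hsymm η ξ ▸ (hc.goodFor ζ hζ ξ hξ η hη).2.2 hζη hνf

theorem exists_separating_of_mem_g_of_notMem_g (hr : IsAmalgam p p' g j) (hc : Coherent p p')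
    (hsymm : ∀ α β, f α β = f β α) (hlt : ∀ α β γ, γ ∈ f α β → γ < α) {y : Ordinal}
    (hx : x ∈ p.a) (hy : y ∈ p.a) (hη : η ∈ p'.a \ p.a) (hxη : x ∈ g η) (hyη : y ∉ g η) :
    ∃ ζ ∈ p.a ∩ p'.a, ζ < η ∧ ¬(x ∈ p.h ζ ↔ y ∈ p.h ζ) := by
  by_contra! not_sep
  obtain ⟨hηa', hηa⟩ := Finset.mem_sdiff.1 hη
  have mem_gη {z : Ordinal} (hz : z ∈ p.a) : z ∈ g η ↔ ∃ δ, DeltaIs p p' z δ ∧ δ ∈ p'.h η := by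
    simpa only [deltaIs_comm (p := p')] using
      hr.symm.mem_g_iff_exists_deltaIs (hc.symm hsymm) hsymm hlt hηa' hz
  obtain ⟨δ, hδ, hδη⟩ := (mem_gη hx).1 hxη
  have hδ_lt : δ < η :=
    (p'.h_le η hηa' δ hδη).lt_of_ne fun h => hηa (h ▸ (Finset.mem_inter.1 hδ.1).1)
  have hyδ : y ∈ p.h δ := (not_sep δ hδ.1 hδ_lt).1 (hc.mem_h_of_deltaIs hx hδ)
  obtain ⟨ε, hεδ, hε⟩ := exists_deltaIs_le hδ.1 hyδ
  have hxε : x ∈ p.h ε :=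
    (not_sep ε hε.1 (hεδ.trans_lt hδ_lt)).2 (hc.mem_h_of_deltaIs hy hε)
  obtain rfl : ε = δ := le_antisymm hεδ (hδ.le_of_mem_h hε.1 hxε)
  exact hyη ((mem_gη hy).2 ⟨ε, hε, hδη⟩)

theorem exists_mem_i_cross_of_separates (hr : IsAmalgam p p' g j) (hc : Coherent p p')
    (hsymm : ∀ α β, f α β = f β α) (hξ : ξ ∈ p.a \ p'.a) (hη : η ∈ p'.a \ p.a)
    (hx : x ∈ p.h ξ) (hζ : ζ ∈ p.a ∩ p'.a) (hζη : ζ < η)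
    (hsep : ¬(ξ ∈ p.h ζ ↔ x ∈ p.h ζ)) : ∃ ν ∈ j ξ η, x ∈ g ν := by
  obtain ⟨hξa, hξa'⟩ := Finset.mem_sdiff.1 hξ
  obtain ⟨hζa, hζa'⟩ := Finset.mem_inter.1 hζ
  have hxa := p.h_sub ξ hξa hx
  have hne : ξ ≠ ζ := fun h => hξa' (h ▸ hζa')
  by_cases hζξ : ζ ∈ p.h ξ
  · have hζ_lt : ζ < ξ := (p.h_le ξ hξa ζ hζξ).lt_of_ne hne.symm
    have hξζ : ξ ∉ p.h ζ := fun h => (p.h_le ζ hζa ξ h).not_gt hζ_lt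
    exact ⟨ζ, hr.mem_i_cross_of_lt hc hξ hη hζ hζ_lt hζη,
      (hr.mem_g_iff_mem_h hc hζa hxa).2 (by tauto)⟩
  · obtain ⟨ν, hν, hxν⟩ := p.exists_mem_i_of_separates hξa hζa hζξ hx hsep
    exact ⟨ν, hr.i_left_subset_i_cross hc hsymm hξ hη hζ hζη hν,
      (hr.mem_g_iff_mem_h hc (p.i_sub_a ξ hξa ζ hζa hne hν) hxa).2 hxν⟩

theorem exists_mem_i_cross_of_mem_left (hr : IsAmalgam p p' g j) (hc : Coherent p p')
    (hsymm : ∀ α β, f α β = f β α) (hlt : ∀ α β γ, γ ∈ f α β → γ < α)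
    (hξ : ξ ∈ p.a \ p'.a) (hη : η ∈ p'.a \ p.a) (hxa : x ∈ p.a) (hx : x ∈ g ξ)
    (hsep : ¬(ξ ∈ g η ↔ x ∈ g η)) : ∃ ν ∈ j ξ η, x ∈ g ν := by
  have hξa := (Finset.mem_sdiff.1 hξ).1
  obtain ⟨ζ, hζ, hζη, hζ_sep⟩ : ∃ ζ ∈ p.a ∩ p'.a, ζ < η ∧ ¬(ξ ∈ p.h ζ ↔ x ∈ p.h ζ) := by
    by_cases hξη : ξ ∈ g η
    · exact hr.exists_separating_of_mem_g_of_notMem_g hc hsymm hlt hξa hxa hη hξη (by tauto)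
    · simpa only [iff_comm] using
        hr.exists_separating_of_mem_g_of_notMem_g hc hsymm hlt hxa hξa hη (by tauto) hξη
  exact hr.exists_mem_i_cross_of_separates hc hsymm hξ hη
    ((hr.mem_g_iff_mem_h hc hξa hxa).1 hx) hζ hζη hζ_sep

theorem exists_mem_i_cross_of_mem_right (hr : IsAmalgam p p' g j) (hc : Coherent p p')
    (hsymm : ∀ α β, f α β = f β α) (hlt : ∀ α β γ, γ ∈ f α β → γ < α)
    (hξ : ξ ∈ p.a \ p'.a) (hη : η ∈ p'.a \ p.a) (hxa' : x ∈ p'.a) (hx : x ∈ g ξ)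
    (hξη : ξ < η) : ∃ ν ∈ j ξ η, x ∈ g ν := by
  obtain ⟨hξa, hξa'⟩ := Finset.mem_sdiff.1 hξ
  obtain ⟨δ, hδ, hδξ⟩ := (hr.mem_g_iff_exists_deltaIs hc hsymm hlt hξa hxa').1 hx
  have hδ_lt : δ < ξ :=
    (p.h_le ξ hξa δ hδξ).lt_of_ne fun h => hξa' (h ▸ (Finset.mem_inter.1 hδ.1).2)
  exact ⟨δ, hr.mem_i_cross_of_lt hc hξ hη hδ.1 hδ_lt (hδ_lt.trans hξη), hr.mem_g_of_deltaIs hδ⟩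

theorem exists_mem_i_cross_of_mem_sdiff (hr : IsAmalgam p p' g j) (hc : Coherent p p')
    (hsymm : ∀ α β, f α β = f β α) (hlt : ∀ α β γ, γ ∈ f α β → γ < α)
    (hξ : ξ ∈ p.a \ p'.a) (hη : η ∈ p'.a \ p.a) (hξη : ξ ∈ g η) (hxξ : x ∈ g ξ)
    (hxη : x ∉ g η) : ∃ ν ∈ j ξ η, x ∈ g ν := by
  obtain ⟨hξa, hξa'⟩ := Finset.mem_sdiff.1 hξ
  obtain ⟨hηa', -⟩ := Finset.mem_sdiff.1 hη
  rcases Finset.mem_union.1 (hr.g_subset hξa hxξ) with hxa | hxa'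
  · exact hr.exists_mem_i_cross_of_mem_left hc hsymm hlt hξ hη hxa hxξ (by tauto)
  · have hξ_le : ξ ≤ η := (hr.symm.isGreatest_g (hc.symm hsymm) hsymm hlt hηa').2 hξη
    exact hr.exists_mem_i_cross_of_mem_right hc hsymm hlt hξ hη hxa' hxξ
      (hξ_le.lt_of_ne fun h => hξa' (h ▸ hηa'))

theorem ostar_subset_of_cross (hr : IsAmalgam p p' g j) (hc : Coherent p p')
    (hsymm : ∀ α β, f α β = f β α) (hlt : ∀ α β γ, γ ∈ f α β → γ < α)
    (hξ : ξ ∈ p.a \ p'.a) (hη : η ∈ p'.a \ p.a) : ostar (g ξ) (g η) ⊆ (j ξ η).biUnion g := by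
  obtain ⟨hξa, hξa'⟩ := Finset.mem_sdiff.1 hξ
  have hηa' := (Finset.mem_sdiff.1 hη).1
  have hne : ξ ≠ η := fun h => hξa' (h ▸ hηa')
  have hc' : Coherent p' p := hc.symm hsymm
  have hj : j ξ η = j η ξ :=
    hr.i_comm hsymm (Finset.mem_union_left _ hξa) (Finset.mem_union_right _ hηa') hne
  intro x hx
  rw [mem_ostar_iff hne (hr.isGreatest_g hc hsymm hlt hξa)
    (hr.symm.isGreatest_g hc' hsymm hlt hηa')] at hx
  rw [Finset.mem_biUnion]
  rcases hx with ⟨hξη, hxξ, hxη⟩ | ⟨hηξ, hxη, hxξ⟩ | ⟨hξη, hηξ, hxξ, hxη⟩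
  · exact hr.exists_mem_i_cross_of_mem_sdiff hc hsymm hlt hξ hη hξη hxξ hxη
  · rw [hj]
    exact hr.symm.exists_mem_i_cross_of_mem_sdiff hc' hsymm hlt hη hξ hηξ hxη hxξ
  · rcases Finset.mem_union.1 (hr.g_subset hξa hxξ) with hxa | hxa'
    · exact hr.exists_mem_i_cross_of_mem_left hc hsymm hlt hξ hη hxa hxξ (by tauto)
    · rw [hj]
      exact hr.symm.exists_mem_i_cross_of_mem_left hc' hsymm hlt hη hξ hxa' hxη (by tauto)

theorem ostar_subset (hr : IsAmalgam p p' g j) (hc : Coherent p p')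
    (hsymm : ∀ α β, f α β = f β α) (hlt : ∀ α β γ, γ ∈ f α β → γ < α)
    (hξ : ξ ∈ p.a ∪ p'.a) (hη : η ∈ p.a ∪ p'.a) (hne : ξ ≠ η) :
    ostar (g ξ) (g η) ⊆ (j ξ η).biUnion g := by
  have hc' : Coherent p' p := hc.symm hsymm
  by_cases hleft : ξ ∈ p.a ∧ η ∈ p.a
  · exact hr.ostar_subset_of_mem_left hc hsymm hlt hleft.1 hleft.2 hne
  by_cases hright : ξ ∈ p'.a ∧ η ∈ p'.a
  · exact hr.symm.ostar_subset_of_mem_left hc' hsymm hlt hright.1 hright.2 hne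
  obtain ⟨hξ, hη⟩ | ⟨hξ, hη⟩ :
      (ξ ∈ p.a \ p'.a ∧ η ∈ p'.a \ p.a) ∨ (ξ ∈ p'.a \ p.a ∧ η ∈ p.a \ p'.a) := by
    simp only [Finset.mem_union, Finset.mem_sdiff] at hξ hη ⊢
    tauto
  · exact hr.ostar_subset_of_cross hc hsymm hlt hξ hη
  · exact hr.symm.ostar_subset_of_cross hc' hsymm hlt hξ hη

theorem i_min_max (hr : IsAmalgam p p' g j) (hsymm : ∀ α β, f α β = f β α)
    (hξ : ξ ∈ p.a ∪ p'.a) (hη : η ∈ p.a ∪ p'.a) (hne : ξ ≠ η) :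
    j (min ξ η) (max ξ η) = j ξ η := by
  rcases le_total ξ η with hle | hle
  · rw [min_eq_left hle, max_eq_right hle]
  · rw [min_eq_right hle, max_eq_left hle, hr.i_comm hsymm hη hξ hne.symm]

/-- The amalgamation `p + p'` as a condition of `P_f`. As `PfCond` asks its third component to be
symmetric at all pairs of ordinals and `j` is only constrained on `a ∪ a'`, the pair is sorted
before `j` is applied to it. -/
def toPfCond (hr : IsAmalgam p p' g j) (hc : Coherent p p') (hsymm : ∀ α β, f α β = f β α)
    (hlt : ∀ α β γ, γ ∈ f α β → γ < α) : PfCond f where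
  a := p.a ∪ p'.a
  h := g
  i ξ η := j (min ξ η) (max ξ η)
  a_lt ξ hξ := (Finset.mem_union.1 hξ).elim (p.a_lt ξ) (p'.a_lt ξ)
  h_sub ξ hξ := (Finset.mem_union.1 hξ).elim hr.g_subset fun hξ' =>
    Finset.union_comm p'.a p.a ▸ hr.symm.g_subset hξ'
  h_mem ξ hξ := (Finset.mem_union.1 hξ).elim (hr.self_mem_g hc)
    (hr.symm.self_mem_g (hc.symm hsymm))
  h_le ξ hξ η hη := (Finset.mem_union.1 hξ).elim
    (fun hξa => (hr.isGreatest_g hc hsymm hlt hξa).2 hη)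
    (fun hξa' => (hr.symm.isGreatest_g (hc.symm hsymm) hsymm hlt hξa').2 hη)
  i_symm ξ η := by rw [min_comm, max_comm]
  i_sub_f ξ hξ η hη hne ν hν :=
    hr.mem_f_of_mem_i hξ hη hne (hr.i_min_max hsymm hξ hη hne ▸ hν)
  i_sub_a ξ hξ η hη hne := (hr.i_min_max hsymm hξ hη hne).symm ▸ hr.i_subset hξ hη hne
  star_cond ξ hξ η hη hne := by
    rw [hr.i_min_max hsymm hξ hη hne]
    exact hr.ostar_subset hc hsymm hlt hξ hη hne

theorem pfLe_left (hr : IsAmalgam p p' g j) (hc : Coherent p p') {r : PfCond f}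
    (ha : p.a ⊆ r.a) (hh : ∀ ξ ∈ p.a, r.h ξ = g ξ)
    (hi : ∀ ξ ∈ p.a, ∀ η ∈ p.a, ξ ≠ η → r.i ξ η = j ξ η) : PfLe r p :=
  ⟨ha, fun ξ hξ => (hh ξ hξ).symm ▸ hr.g_inter_a hc hξ,
    fun ξ hξ η hη hne => (hi ξ hξ η hη hne).trans (hr.i_left ξ hξ η hη hne)⟩

end IsAmalgam

theorem stmt11_general (f : Ordinal → Ordinal → Set Ordinal) (hsymm : ∀ α β, f α β = f β α)
    (hlt : ∀ α β γ, γ ∈ f α β → γ < α ∧ γ < β) (p p' : PfCond f) (hc : Coherent p p')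
    (g : Ordinal → Finset Ordinal) (j : Ordinal → Ordinal → Finset Ordinal)
    (hr : IsAmalgam p p' g j) :
    ∃ r : PfCond f, r.a = p.a ∪ p'.a ∧
      (∀ ξ ∈ r.a, r.h ξ = g ξ) ∧
      (∀ ξ ∈ r.a, ∀ η ∈ r.a, ξ ≠ η → r.i ξ η = j ξ η) ∧
      PfLe r p ∧ PfLe r p' := by
  let r : PfCond f := hr.toPfCond hc hsymm fun α β γ h => (hlt α β γ h).1
  have hi : ∀ ξ ∈ r.a, ∀ η ∈ r.a, ξ ≠ η → r.i ξ η = j ξ η :=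
    fun _ hξ _ hη hne => hr.i_min_max hsymm hξ hη hne
  have left : p.a ⊆ r.a := Finset.subset_union_left
  have right : p'.a ⊆ r.a := Finset.subset_union_right
  refine ⟨r, rfl, fun _ _ => rfl, hi, ?_, ?_⟩
  · exact hr.pfLe_left hc left (fun _ _ => rfl) fun ξ hξ η hη => hi ξ (left hξ) η (left hη)
  · exact hr.symm.pfLe_left (hc.symm hsymm) right (fun _ _ => rfl)
      fun ξ hξ η hη => hi ξ (right hξ) η (right hη)

theorem stmt11
    (f : Ordinal → Ordinal → Set Ordinal)
    (hsymm : ∀ α β, f α β = f β α)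
    (hlt : ∀ α β γ, γ ∈ f α β → γ < α ∧ γ < β)
    (hcount : ∀ α β, (f α β).Countable)
    (p p' : PfCond f) (htw : GoodTwins p p')
    (g : Ordinal → Finset Ordinal) (j : Ordinal → Ordinal → Finset Ordinal)
    (hg1 : ∀ ξ ∈ p.a ∩ p'.a, g ξ = p.h ξ ∪ p'.h ξ)
    (hg2 : ∀ ξ ∈ p.a \ p'.a, g ξ = p.h ξ ∪
      (p'.a \ p.a).filter (fun η => ∃ δ, DeltaIs p p' η δ ∧ δ ∈ p.h ξ))
    (hg3 : ∀ ξ ∈ p'.a \ p.a, g ξ = p'.h ξ ∪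
      (p.a \ p'.a).filter (fun η => ∃ δ, DeltaIs p p' η δ ∧ δ ∈ p'.h ξ))
    (hj1 : ∀ ξ ∈ p.a, ∀ η ∈ p.a, ξ ≠ η → j ξ η = p.i ξ η)
    (hj2 : ∀ ξ ∈ p'.a, ∀ η ∈ p'.a, ξ ≠ η → j ξ η = p'.i ξ η)
    (hj3 : ∀ ξ η, ξ ∈ p.a ∪ p'.a → η ∈ p.a ∪ p'.a →
      ¬ (ξ ∈ p.a ∧ η ∈ p.a) → ¬ (ξ ∈ p'.a ∧ η ∈ p'.a) →
      j ξ η = (p.a ∪ p'.a).filter (fun ν => ν ∈ f ξ η)) :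
    ∃ r : PfCond f, r.a = p.a ∪ p'.a ∧
      (∀ ξ ∈ r.a, r.h ξ = g ξ) ∧
      (∀ ξ ∈ r.a, ∀ η ∈ r.a, ξ ≠ η → r.i ξ η = j ξ η) ∧
      PfLe r p ∧ PfLe r p' :=
  stmt11_general f hsymm hlt p p' htw.coherent g j ⟨hg1, hg2, hg3, hj1, hj2, hj3⟩
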